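/- Let $(S,\mathcal L)$ be a linear space: $\mathcal L$ is a nonempty family of subsets of $S$ (lines), each with at least $3$ elements, such that any two distinct points of $S$ lie on exactly one common line. Let $V_2(S,\mathcal L)$ be the Veronese space whose points are the multisets of size $2$ with elements in $S$ and whose blocks are the sets $a+B=\{a+x : x\in B\}$ and $2B=\{2x : x\in B\}$ with $a\in S$, $B\in\mathcal L$. Two points are adjacent if some block contains both. The leaves are the sets $a+S$ ($a\in S$) and $2S$; every block is contained in exactly one leaf. Say that two blocks cross if they share a point and lie in distinct leaves. Let $L_1,K_1,L_2,K_2$ be blocks forming a proper quadrangle, i.e. they lie in pairwise distinct leaves and there are four pairwise distinct points $p_1\in L_1\cap K_1$, $p_2\in K_1\cap L_2$, $p_3\in L_2\cap K_2$, $p_4\in K_2\cap L_1$ such that $p_1,p_3$ are not adjacent and $p_2,p_4$ are not adjacent. If a block $L_3$ crosses both $K_1$ and $K_2$, and a block $K_3$ crosses both $L_1$ and $L_2$, then $K_3$ and $L_3$ share a point. -/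

import Mathlib

def AtLeastThree {α : Type*} (B : Set α) : Prop :=
  ∃ a b c, a ∈ B ∧ b ∈ B ∧ c ∈ B ∧ a ≠ b ∧ a ≠ c ∧ b ≠ c

def IsPLS {α : Type*} (L : Set (Set α)) : Prop :=
  L.Nonempty ∧ (∀ B ∈ L, AtLeastThree B) ∧
    ∀ p q : α, p ≠ q → ∀ B₁ ∈ L, ∀ B₂ ∈ L,
      p ∈ B₁ → q ∈ B₁ → p ∈ B₂ → q ∈ B₂ → B₁ = B₂

def IsLinearSpace {α : Type*} (L : Set (Set α)) : Prop :=
  IsPLS L ∧ ∀ p q : α, p ≠ q → ∃ B ∈ L, p ∈ B ∧ q ∈ B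

/-- The set `e + r·B = {e + r·x : x ∈ B}`. -/
def veroBlock {S : Type*} (e : Multiset S) (r : ℕ) (B : Set S) : Set (Multiset S) :=
  { m | ∃ x ∈ B, m = e + Multiset.replicate r x }

/-- The blocks of the `k`-th Veronese space over `(S, L)`; its points are the multisets of
cardinality `k`. -/
def veroBlocks {S : Type*} (k : ℕ) (L : Set (Set S)) : Set (Set (Multiset S)) :=
  { Bl | ∃ (r : ℕ) (e : Multiset S) (B : Set S),
      0 < r ∧ r ≤ k ∧ Multiset.card e = k - r ∧ B ∈ L ∧ Bl = veroBlock e r B }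

/-- The leaves `e + r·S` of the `k`-th Veronese space over a structure with point set `S`. -/
def veroLeaves (S : Type*) (k : ℕ) : Set (Set (Multiset S)) :=
  { T | ∃ (r : ℕ) (e : Multiset S),
      0 < r ∧ r ≤ k ∧ Multiset.card e = k - r ∧ T = veroBlock e r Set.univ }

/-- Two points are adjacent if some block contains both. -/
def VerAdj {S : Type*} (k : ℕ) (L : Set (Set S)) (f g : Multiset S) : Prop :=
  ∃ Bl ∈ veroBlocks k L, f ∈ Bl ∧ g ∈ Bl

/-- The leaves containing `A` and `B` are distinct (every block lies in exactly one leaf):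
no leaf contains both. -/
def InDistinctLeaves {S : Type*} (k : ℕ) (A B : Set (Multiset S)) : Prop :=
  ¬ ∃ T ∈ veroLeaves S k, A ⊆ T ∧ B ⊆ T

/-- `A` crosses `B`: they share a point and lie in distinct leaves. -/
def VeroCross {S : Type*} (k : ℕ) (A B : Set (Multiset S)) : Prop :=
  (A ∩ B).Nonempty ∧ InDistinctLeaves k A B

/-- Blocks `L₁, K₁, L₂, K₂` form a quadrangle without diagonals. -/
def IsQuadrangleWithoutDiagonals {S : Type*} (k : ℕ) (L : Set (Set S))
    (L₁ K₁ L₂ K₂ : Set (Multiset S)) : Prop :=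
  L₁ ∈ veroBlocks k L ∧ K₁ ∈ veroBlocks k L ∧ L₂ ∈ veroBlocks k L ∧ K₂ ∈ veroBlocks k L ∧
  ∃ p₁ p₂ p₃ p₄ : Multiset S,
    (p₁ ≠ p₂ ∧ p₁ ≠ p₃ ∧ p₁ ≠ p₄ ∧ p₂ ≠ p₃ ∧ p₂ ≠ p₄ ∧ p₃ ≠ p₄) ∧
    p₁ ∈ L₁ ∩ K₁ ∧ p₂ ∈ K₁ ∩ L₂ ∧ p₃ ∈ L₂ ∩ K₂ ∧ p₄ ∈ K₂ ∩ L₁ ∧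
    ¬ VerAdj k L p₁ p₃ ∧ ¬ VerAdj k L p₂ p₄

/-- A quadrangle without diagonals is proper if its sides lie in pairwise distinct leaves. -/
def IsProperQuadrangle {S : Type*} (k : ℕ) (L : Set (Set S))
    (L₁ K₁ L₂ K₂ : Set (Multiset S)) : Prop :=
  IsQuadrangleWithoutDiagonals k L L₁ K₁ L₂ K₂ ∧
    InDistinctLeaves k L₁ K₁ ∧ InDistinctLeaves k L₁ L₂ ∧ InDistinctLeaves k L₁ K₂ ∧
    InDistinctLeaves k K₁ L₂ ∧ InDistinctLeaves k K₁ K₂ ∧ InDistinctLeaves k L₂ K₂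

/-- The leaves of the second Veronese space are indexed by `Option S`: the index `some a` stands
for `a + S` and `none` for `2S`. This is the copy of `B` in the leaf with the given index. -/
def leafBlock {S : Type*} : Option S → Set S → Set (Multiset S)
  | some a, B => veroBlock {a} 1 B
  | none, B => veroBlock 0 2 B

/-- The position, inside the leaf `u`, of the point where `u` meets the leaf `v ≠ u`. -/
def leafCoord {S : Type*} : Option S → Option S → Option S
  | some _, some b => some b
  | some a, none => some a
  | none, v => v

theorem exists_leafBlock_of_mem_veroBlocks {S : Type*} {ℒ : Set (Set S)} {A : Set (Multiset S)}
    (hA : A ∈ veroBlocks 2 ℒ) : ∃ u, ∃ B ∈ ℒ, A = leafBlock u B := by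
  obtain ⟨r, e, B, h0, h2, hc, hB, rfl⟩ := hA
  interval_cases r
  · obtain ⟨a, rfl⟩ := Multiset.card_eq_one.1 hc
    exact ⟨some a, B, hB, rfl⟩
  · obtain rfl := Multiset.card_eq_zero.1 hc
    exact ⟨none, B, hB, rfl⟩

theorem veroBlock_mono {S : Type*} (e : Multiset S) (r : ℕ) {B C : Set S} (h : B ⊆ C) :
    veroBlock e r B ⊆ veroBlock e r C :=
  fun _ ⟨x, hx, hm⟩ => ⟨x, h hx, hm⟩

theorem leafBlock_univ_mem_veroLeaves {S : Type*} (u : Option S) :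
    leafBlock u Set.univ ∈ veroLeaves S 2 := by
  cases u with
  | none => exact ⟨2, 0, by simp, by simp, by simp, rfl⟩
  | some a => exact ⟨1, {a}, by simp, by simp, by simp, rfl⟩

theorem InDistinctLeaves.index_ne {S : Type*} {u v : Option S} {B C : Set S}
    (h : InDistinctLeaves 2 (leafBlock u B) (leafBlock v C)) : u ≠ v := by
  rintro rfl
  refine h ⟨_, leafBlock_univ_mem_veroLeaves u, ?_, ?_⟩ <;>
    cases u <;> exact veroBlock_mono _ _ (Set.subset_univ _)

theorem mem_leafBlock_some {S : Type*} {a : S} {B : Set S} {m : Multiset S} :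
    m ∈ leafBlock (some a) B ↔ ∃ x ∈ B, m = {a, x} := Iff.rfl

theorem mem_leafBlock_none {S : Type*} {B : Set S} {m : Multiset S} :
    m ∈ leafBlock none B ↔ ∃ x ∈ B, m = {x, x} := by
  simp [leafBlock, veroBlock, Multiset.replicate_succ]

theorem leafBlock_self_inter_nonempty {S : Type*} (u : Option S) {B C : Set S} :
    (B ∩ C).Nonempty → (leafBlock u B ∩ leafBlock u C).Nonempty := by
  rintro ⟨x, hB, hC⟩
  cases u <;> exact ⟨_, ⟨x, hB, rfl⟩, ⟨x, hC, rfl⟩⟩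

theorem pair_eq_pair_iff {S : Type*} {a b c d : S} :
    ({a, b} : Multiset S) = {c, d} ↔ a = c ∧ b = d ∨ a = d ∧ b = c := by
  simp only [Multiset.insert_eq_cons, Multiset.cons_eq_cons, Multiset.singleton_inj,
    Multiset.singleton_eq_cons_iff]
  grind

theorem leafBlock_inter_nonempty_iff {S : Type*} {u v : Option S} (huv : u ≠ v) {B C : Set S} :
    (leafBlock u B ∩ leafBlock v C).Nonempty ↔
      (∃ x ∈ B, leafCoord u v = some x) ∧ ∃ y ∈ C, leafCoord v u = some y := by
  cases u <;> cases v <;>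
    simp [Set.Nonempty, mem_leafBlock_some, mem_leafBlock_none, leafCoord,
      -Multiset.insert_eq_cons, pair_eq_pair_iff] at * <;> grind

set_option maxHeartbeats 800000 in
theorem stmt_7 {S : Type*} (ℒ : Set (Set S)) (hL : IsLinearSpace ℒ)
    (L₁ K₁ L₂ K₂ : Set (Multiset S)) (hQ : IsProperQuadrangle 2 ℒ L₁ K₁ L₂ K₂)
    (L₃ K₃ : Set (Multiset S)) (hL₃ : L₃ ∈ veroBlocks 2 ℒ) (hK₃ : K₃ ∈ veroBlocks 2 ℒ)
    (hL₃K₁ : VeroCross 2 L₃ K₁) (hL₃K₂ : VeroCross 2 L₃ K₂)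
    (hK₃L₁ : VeroCross 2 K₃ L₁) (hK₃L₂ : VeroCross 2 K₃ L₂) :
    (K₃ ∩ L₃).Nonempty := by
  obtain ⟨⟨hL₁, hK₁, hL₂, hK₂, p₁, p₂, p₃, p₄, -, h₁, h₂, h₃, h₄, -, -⟩,
    d₁, d₂, d₃, d₄, d₅, d₆⟩ := hQ
  have line_eq : ∀ B ∈ ℒ, ∀ C ∈ ℒ, ∀ p ∈ B, p ∈ C → ∀ q ∈ B, q ∈ C → p ≠ q → B = C :=
    fun B hB C hC p hpB hpC q hqB hqC hpq => hL.1.2.2 p q hpq B hB C hC hpB hqB hpC hqC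
  obtain ⟨l₁, A₁, hA₁, rfl⟩ := exists_leafBlock_of_mem_veroBlocks hL₁
  obtain ⟨l₂, A₂, hA₂, rfl⟩ := exists_leafBlock_of_mem_veroBlocks hL₂
  obtain ⟨l₃, A₃, hA₃, rfl⟩ := exists_leafBlock_of_mem_veroBlocks hL₃
  obtain ⟨k₁, B₁, hB₁, rfl⟩ := exists_leafBlock_of_mem_veroBlocks hK₁
  obtain ⟨k₂, B₂, hB₂, rfl⟩ := exists_leafBlock_of_mem_veroBlocks hK₂
  obtain ⟨k₃, B₃, hB₃, rfl⟩ := exists_leafBlock_of_mem_veroBlocks hK₃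
  replace d₁ := d₁.index_ne
  replace d₂ := d₂.index_ne
  replace d₃ := d₃.index_ne
  replace d₄ := d₄.index_ne
  replace d₅ := d₅.index_ne
  replace d₆ := d₆.index_ne
  obtain ⟨h₅, e₅⟩ := hL₃K₁
  obtain ⟨h₆, e₆⟩ := hL₃K₂
  obtain ⟨h₇, e₇⟩ := hK₃L₁
  obtain ⟨h₈, e₈⟩ := hK₃L₂
  replace e₅ := e₅.index_ne
  replace e₆ := e₆.index_ne
  replace e₇ := e₇.index_ne
  replace e₈ := e₈.index_ne
  replace h₁ := (leafBlock_inter_nonempty_iff d₁).1 ⟨_, h₁⟩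
  replace h₂ := (leafBlock_inter_nonempty_iff d₄).1 ⟨_, h₂⟩
  replace h₃ := (leafBlock_inter_nonempty_iff d₆).1 ⟨_, h₃⟩
  replace h₄ := (leafBlock_inter_nonempty_iff d₃.symm).1 ⟨_, h₄⟩
  rw [leafBlock_inter_nonempty_iff e₅] at h₅
  rw [leafBlock_inter_nonempty_iff e₆] at h₆
  rw [leafBlock_inter_nonempty_iff e₇] at h₇
  rw [leafBlock_inter_nonempty_iff e₈] at h₈
  clear hL hL₁ hL₂ hL₃ hK₁ hK₂ hK₃
  have c₁ := eq_or_ne l₃ l₁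
  have c₂ := eq_or_ne l₃ l₂
  have c₃ := eq_or_ne k₃ k₁
  have c₄ := eq_or_ne k₃ k₂
  by_cases hkl : k₃ = l₃
  · subst hkl
    apply leafBlock_self_inter_nonempty
    suffices ∃ x, x ∈ B₃ ∧ x ∈ A₃ from this
    cases l₁ <;> cases l₂ <;> cases k₁ <;> cases k₂ <;> cases k₃ <;>
      simp only [leafCoord, ne_eq, not_true_eq_false, reduceCtorEq, not_false_eq_true,
        Option.some.injEq, exists_eq_right'] at * <;> grind
  · rw [leafBlock_inter_nonempty_iff hkl]
    cases l₁ <;> cases l₂ <;> cases k₁ <;> cases k₂ <;> cases k₃ <;> cases l₃ <;>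
      simp only [leafCoord, ne_eq, not_true_eq_false, reduceCtorEq, not_false_eq_true,
        Option.some.injEq, exists_eq_right'] at * <;> grind
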